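/- arXiv:2512.16116 — 2 statements merged into one kernel-verified Lean document; each statement's English description precedes it below -/
import Mathlib

section
/- Let (G,B) be an enhanced Rota-Baxter two-sided brace with descendent brace G_B = (G,·,∗), a ∗ b = a ∘ Ad∘_{B(a)}(b), and B₊(a) = a ∘ B(a). Set G₊ = Im B₊, G₋ = Im B, K₊ = Ker B, K₋ = Ker B₊ (kernels taken as brace homomorphisms out of G_B, i.e. K₊ = {a ∈ G | B(a) = e}, K₋ = {a ∈ G | a ∘ B(a) = e}). Then K₊ is an ideal of the sub-brace G₊ and K₋ is an ideal of the sub-brace G₋; in particular K₋ ⊆ G₋ and K₊ ⊆ G₊. -/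
/-!
The enhanced identity is much stronger than it looks. At `x = (B a)⁻¹` it reads
`B (a ∘ b) = B a · B b`, so `B` is a brace homomorphism from `(G, ·, ∘)` to the trivial brace
`(G, ·, ·)`. Its kernel `K₊` is therefore an ideal of all of `G`, and it lies in `G₊` because
`B₊` fixes it pointwise.

As `(G, ·)` is abelian, `B` is moreover invariant under `∘`-conjugation, and at `a = e` the
identity becomes `x ∘ B b = x · B b`. Hence `B₊ x = x · B x` and `K₋ = {x | B x = x⁻¹}`. Every
such `x` equals `B (x⁻¹)`, so it lies in `G₋`, where the two operations agree; there the ideal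
conditions only concern the abelian group `(G, ·)`.
-/

structure IsGroup {G : Type*} (op : G → G → G) (e : G) (inv : G → G) : Prop where
  assoc : ∀ a b c, op (op a b) c = op a (op b c)
  one_op : ∀ a, op e a = a
  op_one : ∀ a, op a e = a
  inv_op : ∀ a, op (inv a) a = e
  op_inv : ∀ a, op a (inv a) = e

/-- A brace: an abelian group `(G, mul)` and a group `(G, circ)` with the compatibility
`a ∘ (b · c) = (a ∘ b) · a⁻¹ · (a ∘ c)`. -/
structure IsBrace {G : Type*} (mul : G → G → G) (e : G) (inv : G → G)
    (circ : G → G → G) (ce : G) (cinv : G → G) : Prop where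
  mul_group : IsGroup mul e inv
  mul_comm : ∀ a b, mul a b = mul b a
  circ_group : IsGroup circ ce cinv
  compat : ∀ a b c, circ a (mul b c) = mul (mul (circ a b) (inv a)) (circ a c)

/-- A homomorphism of braces preserves both operations. -/
def IsBraceHom {G H : Type*} (mulG circG : G → G → G) (mulH circH : H → H → H)
    (f : G → H) : Prop :=
  (∀ a b, f (mulG a b) = mulH (f a) (f b)) ∧ (∀ a b, f (circG a b) = circH (f a) (f b))

/-- A brace automorphism: a bijective self-homomorphism. -/
def IsBraceAut {H : Type*} (mulH circH : H → H → H) (f : H → H) : Prop :=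
  Function.Bijective f ∧ IsBraceHom mulH circH mulH circH f

/-- A semi-trivial action of the brace `G` on the brace `H`: each `Φ a` is a brace
automorphism of `H` and `Φ (a ∘ b) = Φ a ∘ Φ b`. -/
def IsSemiTrivialAction {G H : Type*} (circG : G → G → G)
    (mulH circH : H → H → H) (Φ : G → H → H) : Prop :=
  (∀ a, IsBraceAut mulH circH (Φ a)) ∧ (∀ a b h, Φ (circG a b) h = Φ a (Φ b h))

/-- A relative Rota-Baxter operator on the brace `G` with respect to the semi-trivial
action `Φ` of `G` on `H`. -/
def IsRelRBO {G H : Type*} (mulG circG : G → G → G) (mulH circH : H → H → H)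
    (Φ : G → H → H) (B : H → G) : Prop :=
  (∀ h k, mulG (B h) (B k) = B (mulH h k)) ∧
  (∀ h k, circG (B h) (B k) = B (circH h (Φ (B h) k)))

/-- An enhanced relative Rota-Baxter operator. -/
def IsEnhancedRelRBO {G H : Type*} (mulG circG : G → G → G) (mulH circH : H → H → H)
    (Φ : G → H → H) (B : H → G) : Prop :=
  (∀ h k, mulG (B h) (B k) = B (mulH h k)) ∧
  (∀ (a : G) (h k : H), circG (mulG (B h) a) (B k)
      = mulG (B (circH h (Φ (mulG (B h) a) k))) a)

/-- A post-group: a group `(G, circ)` with an operation `tri` such that each left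
multiplication `tri a` is an automorphism of `(G, circ)` and the weighted associativity
`(a ∘ (a ⊳ b)) ⊳ c = a ⊳ (b ⊳ c)` holds. -/
structure IsPostGroup {G : Type*} (circ : G → G → G) (ce : G) (cinv : G → G)
    (tri : G → G → G) : Prop where
  circ_group : IsGroup circ ce cinv
  tri_bij : ∀ a, Function.Bijective (tri a)
  tri_circ : ∀ a b c, tri a (circ b c) = circ (tri a b) (tri a c)
  weighted : ∀ a b c, tri (circ a (tri a b)) c = tri a (tri b c)

/-- A post-brace: a brace `(G, mul, circ)` with `tri` making `(G, circ, tri)` a post-group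
and `a ⊳ (b · c) = (a ⊳ b) · (a ⊳ c)`. -/
structure IsPostBrace {G : Type*} (mul : G → G → G) (e : G) (inv : G → G)
    (circ : G → G → G) (ce : G) (cinv : G → G) (tri : G → G → G) : Prop where
  brace : IsBrace mul e inv circ ce cinv
  post : IsPostGroup circ ce cinv tri
  tri_mul : ∀ a b c, tri a (mul b c) = mul (tri a b) (tri a c)

/-- A two-sided brace. -/
def IsTwoSidedBrace {G : Type*} (mul : G → G → G) (e : G) (inv : G → G)
    (circ : G → G → G) (ce : G) (cinv : G → G) : Prop :=
  IsBrace mul e inv circ ce cinv ∧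
  ∀ a b c, circ (mul a b) c = mul (mul (circ a c) (inv c)) (circ b c)

/-- The adjoint action of the `circ`-group: `Ad∘_a(b) = a ∘ b ∘ ā`. -/
def adC {G : Type*} (circ : G → G → G) (cinv : G → G) (a b : G) : G :=
  circ (circ a b) (cinv a)

/-- A Rota-Baxter operator on a two-sided brace (w.r.t. the adjoint semi-trivial action). -/
def IsRBTwoSided {G : Type*} (mul circ : G → G → G) (cinv : G → G) (B : G → G) : Prop :=
  (∀ a b, mul (B a) (B b) = B (mul a b)) ∧
  (∀ a b, circ (B a) (B b) = B (circ a (adC circ cinv (B a) b)))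

/-- An enhanced Rota-Baxter operator on a two-sided brace. -/
def IsEnhancedRBTwoSided {G : Type*} (mul circ : G → G → G) (cinv : G → G)
    (B : G → G) : Prop :=
  IsRBTwoSided mul circ cinv B ∧
  ∀ a b x, circ (mul (B a) x) (B b)
      = mul (B (circ a (adC circ cinv (mul (B a) x) b))) x

/-- `R × Id` on `X × X × X`. -/
def YB12 {X : Type*} (R : X × X → X × X) : X × X × X → X × X × X :=
  fun p => ((R (p.1, p.2.1)).1, (R (p.1, p.2.1)).2, p.2.2)

/-- `Id × R` on `X × X × X`. -/
def YB23 {X : Type*} (R : X × X → X × X) : X × X × X → X × X × X :=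
  fun p => (p.1, R p.2)

/-- A set-theoretical solution of the Yang-Baxter equation. -/
def IsYBSolution {X : Type*} (R : X × X → X × X) : Prop :=
  Function.Bijective R ∧
  YB12 R ∘ YB23 R ∘ YB12 R = YB23 R ∘ YB12 R ∘ YB23 R

/-- Non-degeneracy of a solution `R (a, b) = (φ_a b, ψ_b a)`. -/
def IsNonDegenerate {X : Type*} (R : X × X → X × X) : Prop :=
  (∀ a, Function.Bijective fun b => (R (a, b)).1) ∧
  (∀ b, Function.Bijective fun a => (R (a, b)).2)

/-- Involutivity of a solution: `R ∘ R = Id`. -/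
def IsInvolutiveSol {X : Type*} (R : X × X → X × X) : Prop :=
  ∀ p, R (R p) = p

/-- A matched pair of groups `(G, H, σ)` with `σ (a, h) = (r a h, l a h)`. -/
def IsMatchedPairOfGroups {G H : Type*} (opG : G → G → G) (eG : G)
    (opH : H → H → H) (eH : H) (r : G → H → H) (l : G → H → G) : Prop :=
  (∀ h, r eG h = h) ∧
  (∀ a b h, r a (r b h) = r (opG a b) h) ∧
  (∀ a b h, l (opG a b) h = opG (l a (r b h)) (l b h)) ∧
  (∀ a, l a eH = a) ∧
  (∀ a h k, l (l a h) k = l a (opH h k)) ∧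
  (∀ a h k, r a (opH h k) = opH (r a h) (r (l a h) k))

/-- A left ideal of the brace with multiplication `op` (with unit `u`) and second
operation `cop`: a subgroup of the `op`-group such that `p⁻¹ op (p cop x) ∈ S`
(expressed via the unique solution `r` of `op p r = cop p x`). -/
def IsLeftIdealOf {P : Type*} (op : P → P → P) (u : P) (cop : P → P → P)
    (S : Set P) : Prop :=
  u ∈ S ∧ (∀ p ∈ S, ∀ q ∈ S, op p q ∈ S) ∧
  (∀ p ∈ S, ∃ q ∈ S, op p q = u ∧ op q p = u) ∧
  (∀ p : P, ∀ x ∈ S, ∀ r, op p r = cop p x → r ∈ S)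

/-- `I` is an ideal of the sub-brace `S` of the ambient brace: a subgroup of `(S, mul)`,
normal in `(S, mul)` and in `(S, circ)`, and a left ideal of `S`. -/
def IsIdealOfSub {G : Type*} (mul : G → G → G) (e : G) (inv : G → G)
    (circ : G → G → G) (cinv : G → G) (S I : Set G) : Prop :=
  I ⊆ S ∧ e ∈ I ∧
  (∀ x ∈ I, ∀ y ∈ I, mul x y ∈ I) ∧ (∀ x ∈ I, inv x ∈ I) ∧
  (∀ s ∈ S, ∀ x ∈ I, mul (mul s x) (inv s) ∈ I) ∧
  (∀ s ∈ S, ∀ x ∈ I, circ (circ s x) (cinv s) ∈ I) ∧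
  (∀ s ∈ S, ∀ x ∈ I, mul (inv s) (circ s x) ∈ I)

namespace IsGroup

variable {G H : Type*} {op : G → G → G} {e : G} {inv : G → G}
  {opH : H → H → H} {eH : H} {invH : H → H}

/-- The group structure given by an explicit operation, unit and inverse. It is not an instance,
since a brace carries two groups on one type; it gives access to the lemmas on `Group`. -/
abbrev toGroup (h : IsGroup op e inv) : Group G where
  mul := op
  mul_assoc := h.assoc
  one := e
  one_mul := h.one_op
  mul_one := h.op_one
  inv := inv
  inv_mul_cancel := h.inv_op

theorem op_eq_unit_iff_eq_inv (h : IsGroup op e inv) {a b : G} : op a b = e ↔ b = inv a :=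
  letI := h.toGroup
  mul_eq_one_iff_eq_inv'

theorem inv_unit (h : IsGroup op e inv) : inv e = e :=
  letI := h.toGroup
  inv_one

theorem inv_inv (h : IsGroup op e inv) (a : G) : inv (inv a) = a :=
  letI := h.toGroup
  _root_.inv_inv a

theorem inv_op_cancel_left (h : IsGroup op e inv) (a b : G) : op (inv a) (op a b) = b :=
  letI := h.toGroup
  inv_mul_cancel_left a b

theorem conj_eq_of_commute (h : IsGroup op e inv) {a b : G} (hab : op a b = op b a) :
    op (op a b) (inv a) = b :=
  letI := h.toGroup
  mul_inv_eq_of_eq_mul hab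

theorem map_unit (hG : IsGroup op e inv) (hH : IsGroup opH eH invH) {f : G → H}
    (hf : ∀ a b, f (op a b) = opH (f a) (f b)) : f e = eH :=
  letI := hG.toGroup
  letI := hH.toGroup
  (MonoidHom.mk' f hf).map_one

theorem map_inv (hG : IsGroup op e inv) (hH : IsGroup opH eH invH) {f : G → H}
    (hf : ∀ a b, f (op a b) = opH (f a) (f b)) (a : G) : f (inv a) = invH (f a) :=
  letI := hG.toGroup
  letI := hH.toGroup
  (MonoidHom.mk' f hf).map_inv a

theorem isBrace_self (h : IsGroup op e inv) (op_comm : ∀ a b, op a b = op b a) :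
    IsBrace op e inv op e inv where
  mul_group := h
  mul_comm := op_comm
  circ_group := h
  compat a b c := by
    rw [h.conj_eq_of_commute (op_comm a b), ← h.assoc, op_comm a b, h.assoc]

end IsGroup

section Brace

variable {G H : Type*} {mul : G → G → G} {e : G} {inv : G → G}
  {circ : G → G → G} {ce : G} {cinv : G → G}

theorem IsBrace.circ_unit_eq (h : IsBrace mul e inv circ ce cinv) : ce = e := by
  have compat_units := h.compat ce e e
  simp only [h.mul_group.one_op, h.mul_group.op_one, h.circ_group.one_op] at compat_units
  rw [← h.mul_group.op_one ce, h.mul_group.op_eq_unit_iff_eq_inv, ← compat_units]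

theorem IsBrace.mul_inv (h : IsBrace mul e inv circ ce cinv) (a b : G) :
    inv (mul a b) = mul (inv a) (inv b) :=
  letI : CommGroup G := { h.mul_group.toGroup with mul_comm := h.mul_comm }
  _root_.mul_inv a b

theorem IsIdealOfSub.restrict {S T I : Set G} (h : IsIdealOfSub mul e inv circ cinv S I)
    (hTS : T ⊆ S) (hIT : I ⊆ T) : IsIdealOfSub mul e inv circ cinv T I :=
  have ⟨_, unit_mem, mul_mem, inv_mem, mul_conj_mem, circ_conj_mem, left_mem⟩ := h
  ⟨hIT, unit_mem, mul_mem, inv_mem, fun s hs => mul_conj_mem s (hTS hs),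
    fun s hs => circ_conj_mem s (hTS hs), fun s hs => left_mem s (hTS hs)⟩

theorem IsBraceHom.isIdealOfSub_univ_ker {mulH circH : H → H → H} {eH ceH : H}
    {invH cinvH : H → H} {f : G → H} (hf : IsBraceHom mul circ mulH circH f)
    (hG : IsBrace mul e inv circ ce cinv) (hH : IsBrace mulH eH invH circH ceH cinvH) :
    IsIdealOfSub mul e inv circ cinv Set.univ {x | f x = eH} := by
  obtain ⟨map_mul, map_circ⟩ := hf
  have map_inv := hG.mul_group.map_inv hH.mul_group map_mul
  have map_cinv := hG.circ_group.map_inv hH.circ_group map_circ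
  have circ_unit (a : H) : circH a eH = a := hH.circ_unit_eq ▸ hH.circ_group.op_one a
  simp only [IsIdealOfSub, Set.mem_ofPred_eq]
  refine ⟨Set.subset_univ _, hG.mul_group.map_unit hH.mul_group map_mul,
    fun x hx y hy => ?mul, fun x hx => ?inv, fun s _ x hx => ?mul_conj,
    fun s _ x hx => ?circ_conj, fun s _ x hx => ?left⟩
  case mul => rw [map_mul, hx, hy, hH.mul_group.one_op]
  case inv => rw [map_inv, hx, hH.mul_group.inv_unit]
  case mul_conj => rw [map_mul, map_mul, map_inv, hx, hH.mul_group.op_one, hH.mul_group.op_inv]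
  case circ_conj =>
    rw [map_circ, map_circ, map_cinv, hx, circ_unit, hH.circ_group.op_inv, hH.circ_unit_eq]
  case left => rw [map_mul, map_circ, map_inv, hx, circ_unit, hH.mul_group.inv_op]

end Brace

namespace IsEnhancedRBTwoSided

variable {G : Type*} {mul : G → G → G} {e : G} {inv : G → G}
  {circ : G → G → G} {ce : G} {cinv : G → G} {B : G → G}

theorem map_mul (hB : IsEnhancedRBTwoSided mul circ cinv B) (a b : G) :
    B (mul a b) = mul (B a) (B b) :=
  (hB.1.1 a b).symm

theorem map_circ (hB : IsEnhancedRBTwoSided mul circ cinv B)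
    (hG : IsBrace mul e inv circ ce cinv) (a b : G) : B (circ a b) = mul (B a) (B b) := by
  obtain rfl := hG.circ_unit_eq
  have adC_unit : adC circ cinv ce b = b :=
    hG.circ_group.conj_eq_of_commute (by rw [hG.circ_group.one_op, hG.circ_group.op_one])
  have enhanced : B b = mul (B (circ a b)) (inv (B a)) := by
    simpa only [hG.mul_group.op_inv, hG.circ_group.one_op, adC_unit] using hB.2 a b (inv (B a))
  rw [enhanced, hG.mul_comm, hG.mul_group.assoc, hG.mul_group.inv_op, hG.mul_group.op_one]

theorem isBraceHom (hB : IsEnhancedRBTwoSided mul circ cinv B)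
    (hG : IsBrace mul e inv circ ce cinv) : IsBraceHom mul circ mul mul B :=
  ⟨hB.map_mul, hB.map_circ hG⟩

theorem map_adC (hB : IsEnhancedRBTwoSided mul circ cinv B)
    (hG : IsBrace mul e inv circ ce cinv) (a b : G) : B (adC circ cinv a b) = B b := by
  rw [adC, hB.map_circ hG, hB.map_circ hG,
    hG.circ_group.map_inv hG.mul_group (hB.map_circ hG),
    hG.mul_group.conj_eq_of_commute (hG.mul_comm _ _)]

theorem circ_map_eq_mul (hB : IsEnhancedRBTwoSided mul circ cinv B)
    (hG : IsBrace mul e inv circ ce cinv) (x b : G) : circ x (B b) = mul x (B b) := by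
  have map_unit : B e = e := hG.mul_group.map_unit hG.mul_group hB.map_mul
  have unit_circ (a : G) : circ e a = a := hG.circ_unit_eq ▸ hG.circ_group.one_op a
  calc circ x (B b) = mul (B (adC circ cinv x b)) x := by
        simpa only [map_unit, hG.mul_group.one_op, unit_circ] using hB.2 e b x
    _ = mul x (B b) := by rw [hB.map_adC hG, hG.mul_comm]

theorem circ_map_self_eq_unit_iff (hB : IsEnhancedRBTwoSided mul circ cinv B)
    (hG : IsBrace mul e inv circ ce cinv) {x : G} : circ x (B x) = e ↔ B x = inv x := by
  rw [hB.circ_map_eq_mul hG, hG.mul_group.op_eq_unit_iff_eq_inv]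

theorem isIdealOfSub_range_setOf_map_eq_inv (hB : IsEnhancedRBTwoSided mul circ cinv B)
    (hG : IsBrace mul e inv circ ce cinv) :
    IsIdealOfSub mul e inv circ cinv (Set.range B) {x | B x = inv x} := by
  have map_inv := hG.mul_group.map_inv hG.mul_group hB.map_mul
  have map_inv_eq_self {x : G} (hx : B x = inv x) : B (inv x) = x := by
    rw [map_inv, hx, hG.mul_group.inv_inv]
  have circ_eq_mul (s : G) {x : G} (hx : B x = inv x) : circ s x = mul s x := by
    rw [← map_inv_eq_self hx, hB.circ_map_eq_mul hG]
  refine ⟨fun x hx => ⟨inv x, map_inv_eq_self hx⟩, ?unit, fun x hx y hy => ?mul,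
    fun x hx => ?inv, fun s _ x hx => ?mul_conj, ?circ_conj, fun s _ x hx => ?left⟩
  case unit =>
    rw [Set.mem_ofPred_eq, hG.mul_group.map_unit hG.mul_group hB.map_mul, hG.mul_group.inv_unit]
  case mul =>
    rw [Set.mem_ofPred_eq] at hx hy ⊢
    rw [hB.map_mul, hx, hy, hG.mul_inv]
  case inv =>
    rw [Set.mem_ofPred_eq] at hx ⊢
    rw [map_inv, hx]
  case mul_conj => rwa [hG.mul_group.conj_eq_of_commute (hG.mul_comm s x)]
  case circ_conj =>
    rintro _ ⟨t, rfl⟩ x hx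
    have commute : circ (B t) x = circ x (B t) := by
      rw [circ_eq_mul _ hx, hB.circ_map_eq_mul hG, hG.mul_comm]
    rwa [hG.circ_group.conj_eq_of_commute commute]
  case left => rwa [circ_eq_mul s hx, hG.mul_group.inv_op_cancel_left]

end IsEnhancedRBTwoSided

theorem statement17_general {G : Type*} (mul : G → G → G) (e : G) (inv : G → G)
    (circ : G → G → G) (ce : G) (cinv : G → G)
    (hG : IsBrace mul e inv circ ce cinv)
    (B : G → G) (hB : IsEnhancedRBTwoSided mul circ cinv B)
    (Bplus : G → G) (hBplus : ∀ a, Bplus a = circ a (B a)) :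
    IsIdealOfSub mul e inv circ cinv (Set.range Bplus) {x : G | B x = e} ∧
    IsIdealOfSub mul e inv circ cinv (Set.range B) {x : G | Bplus x = e} := by
  have ker_ideal : IsIdealOfSub mul e inv circ cinv Set.univ {x | B x = e} :=
    (hB.isBraceHom hG).isIdealOfSub_univ_ker hG (hG.mul_group.isBrace_self hG.mul_comm)
  have Bplus_eq_self {x : G} (hx : B x = e) : Bplus x = x := by
    rw [hBplus, hx, ← hG.circ_unit_eq, hG.circ_group.op_one]
  refine ⟨ker_ideal.restrict (Set.subset_univ _) fun x hx => ⟨x, Bplus_eq_self hx⟩, ?_⟩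
  simp only [hBplus, hB.circ_map_self_eq_unit_iff hG]
  exact hB.isIdealOfSub_range_setOf_map_eq_inv hG

/-- For an enhanced Rota-Baxter two-sided brace `(G, B)` with
`B₊(a) = a ∘ B(a)`, `G₊ = Im B₊`, `G₋ = Im B`, `K₊ = Ker B`, `K₋ = Ker B₊`:
`K₊` is an ideal of the sub-brace `G₊` and `K₋` is an ideal of the sub-brace `G₋`
(in particular `K₊ ⊆ G₊` and `K₋ ⊆ G₋`). -/
theorem statement17 {G : Type*} (mul : G → G → G) (e : G) (inv : G → G)
    (circ : G → G → G) (ce : G) (cinv : G → G)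
    (hG : IsTwoSidedBrace mul e inv circ ce cinv)
    (B : G → G) (hB : IsEnhancedRBTwoSided mul circ cinv B)
    (Bplus : G → G) (hBplus : ∀ a, Bplus a = circ a (B a)) :
    IsIdealOfSub mul e inv circ cinv (Set.range Bplus) {x : G | B x = e} ∧
    IsIdealOfSub mul e inv circ cinv (Set.range B) {x : G | Bplus x = e} :=
  statement17_general mul e inv circ ce cinv hG.1 B hB Bplus hBplus
end

section
/- (Factorization theorem for enhanced Rota-Baxter two-sided braces.) Let (G,B) be an enhanced Rota-Baxter two-sided brace, B₊(a) = a ∘ B(a), G₊ = Im B₊, G₋ = Im B, K₊ = Ker B, K₋ = Ker B₊, Θ : G₋/K₋ → G₊/K₊ the Cayley transform Θ([B(a)]) = [B₊(a)], and G_Θ = {(a₊, a₋) ∈ G₊ × G₋ | Θ([a₋]) = [a₊]}. Then every element a ∈ G can be written uniquely as a = a₊ ∘ (a₋)‾ with (a₊, a₋) ∈ G_Θ (where x̄ denotes the inverse in (G,∘)), and this factorization also satisfies a = (a₋)⁻¹ · a₊ (with x⁻¹ the inverse in (G,·)); explicitly, (a₊, a₋) = (B₊(a), B(a)). -/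
/-- The Mathlib group given by operations satisfying the predicate `IsGroup`. -/
abbrev IsGroup.toGroup_s19 {G : Type*} {op : G → G → G} {e : G} {inv : G → G}
    (h : IsGroup op e inv) : Group G where
  mul := op
  one := e
  inv := inv
  mul_assoc := h.assoc
  one_mul := h.one_op
  mul_one := h.op_one
  inv_mul_cancel := h.inv_op

lemma IsGroup.op_inv_cancel_right {G : Type*} {op : G → G → G} {e : G} {inv : G → G}
    (h : IsGroup op e inv) (a b : G) : op (op a b) (inv b) = a :=
  let := h.toGroup_s19
  mul_inv_cancel_right a b

lemma IsBrace.circ_one_eq {G : Type*} {mul : G → G → G} {e : G} {inv : G → G}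
    {circ : G → G → G} {ce : G} {cinv : G → G}
    (h : IsBrace mul e inv circ ce cinv) : ce = e := by
  have inv_circ_one : e = inv ce := by
    simpa only [h.circ_group.one_op, h.mul_group.one_op, h.mul_group.op_one] using h.compat ce e e
  calc
    ce = mul ce e := (h.mul_group.op_one ce).symm
    _ = mul ce (inv ce) := congrArg (mul ce) inv_circ_one
    _ = e := h.mul_group.op_inv ce

/-- The endomorphism of the group `(G, mul)` underlying an enhanced Rota-Baxter operator. -/
abbrev IsEnhancedRBTwoSided.toMonoidHom {G : Type*} {mul : G → G → G} {e : G} {inv : G → G}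
    {circ : G → G → G} {cinv : G → G} {B : G → G}
    (hB : IsEnhancedRBTwoSided mul circ cinv B) (hm : IsGroup mul e inv) :
    letI := hm.toGroup_s19
    G →* G :=
  letI := hm.toGroup_s19
  MonoidHom.mk' B fun a b => (hB.1.1 a b).symm

lemma IsEnhancedRBTwoSided.circ_map_self {G : Type*} {mul : G → G → G} {e : G} {inv : G → G}
    {circ : G → G → G} {cinv : G → G} {B : G → G}
    (hB : IsEnhancedRBTwoSided mul circ cinv B) (hm : IsGroup mul e inv)
    (hc : IsGroup circ e cinv) (a : G) : circ a (B a) = mul (B a) a := by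
  have map_one_eq : B e = e :=
    let := hm.toGroup_s19
    map_one (hB.toMonoidHom hm)
  have adC_self : adC circ cinv a a = a := hc.op_inv_cancel_right a a
  calc
    circ a (B a) = circ (mul (B e) a) (B a) := by rw [map_one_eq, hm.one_op]
    _ = mul (B (circ e (adC circ cinv (mul (B e) a) a))) a := hB.2 e a a
    _ = mul (B a) a := by rw [map_one_eq, hm.one_op, adC_self, hc.one_op]

/-- The set `G_Θ` of pairs `(a₊, a₋)` in `Im Bplus × Im B` with `Θ([a₋]) = [a₊]`. As
`Θ([B c]) = [Bplus c]`, the condition asks for some `c` with `a₋ = B c` for which `Bplus c` and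
`a₊` agree modulo `Ker B`. -/
def cayleyGraph {G : Type*} [Group G] (B Bplus : G → G) : Set (G × G) :=
  {p | p.1 ∈ Set.range Bplus ∧ ∃ c, B c = p.2 ∧ B (Bplus c * p.1⁻¹) = 1}

lemma cayleyGraph_eq_range {G : Type*} [Group G] (B : G →* G) :
    cayleyGraph B (fun a => B a * a) = Set.range fun a => (B a * a, B a) := by
  ext ⟨p, q⟩
  constructor
  · rintro ⟨-, c, rfl : B c = q, hker⟩
    have map_eq : B (B c * c) = B p := by
      rwa [map_mul, map_inv, mul_inv_eq_one] at hker
    have map_d : B ((B c)⁻¹ * p) = B c := by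
      rw [map_mul, map_inv, ← map_eq, map_mul, inv_mul_cancel_left]
    exact ⟨(B c)⁻¹ * p, by simp only [map_d, mul_inv_cancel_left]⟩
  · rintro ⟨a, ha⟩
    obtain ⟨rfl, rfl⟩ := Prod.mk.inj ha
    exact ⟨⟨a, rfl⟩, a, rfl, by rw [mul_inv_cancel, map_one]⟩

theorem statement19_general {G : Type*} [Group G] {circ : G → G → G} {ce : G} {cinv : G → G}
    (hcirc : IsGroup circ ce cinv) (B : G →* G) (hB : ∀ a, circ a (B a) = B a * a)
    {Bplus : G → G} (hBplus : ∀ a, Bplus a = circ a (B a)) (a : G) :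
    ((Bplus a, B a) ∈ cayleyGraph B Bplus ∧
      a = circ (Bplus a) (cinv (B a)) ∧
      a = (B a)⁻¹ * Bplus a) ∧
    ∀ p ∈ cayleyGraph B Bplus, a = circ p.1 (cinv p.2) → p = (Bplus a, B a) := by
  have factor (d : G) : circ (Bplus d) (cinv (B d)) = d := by
    rw [hBplus, hcirc.op_inv_cancel_right]
  have Bplus_eq : Bplus = fun d => B d * d := funext fun d => (hBplus d).trans (hB d)
  have graph_eq : cayleyGraph B Bplus = Set.range fun d => (Bplus d, B d) := by
    rw [Bplus_eq, cayleyGraph_eq_range]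
  refine ⟨⟨graph_eq ▸ ⟨a, rfl⟩, (factor a).symm, ?_⟩, ?_⟩
  · rw [Bplus_eq, inv_mul_cancel_left]
  · rw [graph_eq]
    rintro _ ⟨d, rfl⟩ ha
    rw [ha, factor d]

/-- (Factorization theorem.) For an enhanced Rota-Baxter two-sided brace
`(G, B)`, with `G_Θ = {(a₊, a₋) ∈ G₊ × G₋ | Θ([a₋]) = [a₊]}`, every `a ∈ G` is uniquely
`a = a₊ ∘ (a₋)‾` with `(a₊, a₋) ∈ G_Θ`; the factorization also satisfies
`a = (a₋)⁻¹ · a₊`, and explicitly `(a₊, a₋) = (B₊(a), B(a))`. -/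
theorem statement19 {G : Type*} (mul : G → G → G) (e : G) (inv : G → G)
    (circ : G → G → G) (ce : G) (cinv : G → G)
    (hG : IsTwoSidedBrace mul e inv circ ce cinv)
    (B : G → G) (hB : IsEnhancedRBTwoSided mul circ cinv B)
    (Bplus : G → G) (hBplus : ∀ a, Bplus a = circ a (B a))
    (GTheta : Set (G × G))
    (hGTheta : ∀ p : G × G, p ∈ GTheta ↔
      (p.1 ∈ Set.range Bplus ∧ ∃ c : G, B c = p.2 ∧ B (mul (Bplus c) (inv p.1)) = e)) :
    ∀ a : G,
      ((Bplus a, B a) ∈ GTheta ∧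
        a = circ (Bplus a) (cinv (B a)) ∧
        a = mul (inv (B a)) (Bplus a)) ∧
      (∀ p : G × G, p ∈ GTheta → a = circ p.1 (cinv p.2) → p = (Bplus a, B a)) := by
  let := hG.1.mul_group.toGroup_s19
  obtain rfl : GTheta = cayleyGraph B Bplus := Set.ext hGTheta
  exact statement19_general hG.1.circ_group (hB.toMonoidHom hG.1.mul_group)
    (hB.circ_map_self hG.1.mul_group (hG.1.circ_one_eq ▸ hG.1.circ_group)) hBplus
end
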